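/- Let q ≥ 3. For every x ∈ I_q with f_q^n(x) ≠ 0 for all n ≥ 0, the digits a_i := ⟨−1/f_q^{i−1}(x)⟩ (i ≥ 1) are nonzero integers, the sequence (a_i)_{i≥1} is an infinite q-regular sequence, and the λ_q-continued fraction [0; a_1, a_2, …] converges to x. Moreover, the map sending x to its digit sequence is a bijection from {x ∈ I_q : f_q^n(x) ≠ 0 for all n ≥ 0} onto the set of all infinite q-regular sequences. -/

import Mathlib

open Filter Topology

/-- `λ_q = 2 cos (π/q)`. -/
noncomputable def lamq (q : ℕ) : ℝ := 2 * Real.cos (Real.pi / q)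

/-- `h_q = (q-2)/2` for even `q` and `(q-3)/2` for odd `q`. -/
def hQ (q : ℕ) : ℕ := if Even q then (q - 2) / 2 else (q - 3) / 2

/-- Forbidden blocks for the nearest `λ_q`-multiple continued fractions.
For `ε ∈ {1,-1}`: the block `(ε)^{h_q+1}`; for even `q` the blocks `((ε)^{h_q}, ε·m)`, `m ≥ 1`;
for odd `q` (including `q = 3`, where `h_q = 0`) the blocks `((ε)^{h_q}, ε·2, (ε)^{h_q}, ε·m)`,
`m ≥ 1`. -/
def IsForbidden (q : ℕ) (L : List ℤ) : Prop :=
  ∃ ε : ℤ, (ε = 1 ∨ ε = -1) ∧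
    (L = List.replicate (hQ q + 1) ε ∨
      (if Even q then
        ∃ m : ℤ, 1 ≤ m ∧ L = List.replicate (hQ q) ε ++ [ε * m]
      else
        ∃ m : ℤ, 1 ≤ m ∧
          L = List.replicate (hQ q) ε ++ ε * 2 :: (List.replicate (hQ q) ε ++ [ε * m])))

/-- An infinite sequence is `q`-regular if no finite subblock is forbidden. -/
def RegularSeq (q : ℕ) (a : ℕ → ℤ) : Prop :=
  ∀ (l len : ℕ), ¬ IsForbidden q (List.ofFn fun j : Fin len => a (l + (j : ℕ)))

/-- An infinite sequence is dual `q`-regular if no reversed finite subblock is forbidden. -/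
def DualRegularSeq (q : ℕ) (a : ℕ → ℤ) : Prop :=
  ∀ (l len : ℕ), ¬ IsForbidden q (List.ofFn fun j : Fin len => a (l + (j : ℕ))).reverse

/-- A finite sequence is `q`-regular if no contiguous subblock is forbidden. -/
def RegularList (q : ℕ) (L : List ℤ) : Prop :=
  ∀ B : List ℤ, B <:+: L → ¬ IsForbidden q B

/-- Numerators of the convergents: `p₀ = a₀λ`, `p₁ = a₁λ·p₀ - 1`,
`pₙ = aₙλ·pₙ₋₁ - pₙ₋₂` (so that `p₋₁ = 1`, `p₋₂ = 0`).  Here `A n` is the digit `aₙ`. -/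
noncomputable def cfP (lam : ℝ) (A : ℕ → ℤ) : ℕ → ℝ
  | 0 => (A 0 : ℝ) * lam
  | 1 => (A 1 : ℝ) * lam * ((A 0 : ℝ) * lam) - 1
  | (n + 2) => (A (n + 2) : ℝ) * lam * cfP lam A (n + 1) - cfP lam A n

/-- Denominators of the convergents: `q₀ = 1`, `q₁ = a₁λ`,
`qₙ = aₙλ·qₙ₋₁ - qₙ₋₂` (so that `q₋₁ = 0`, `q₋₂ = -1`). -/
noncomputable def cfQ (lam : ℝ) (A : ℕ → ℤ) : ℕ → ℝ
  | 0 => 1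
  | 1 => (A 1 : ℝ) * lam
  | (n + 2) => (A (n + 2) : ℝ) * lam * cfQ lam A (n + 1) - cfQ lam A n

/-- The λ-continued fraction with digit sequence `A` converges to `x`. -/
def CFConvergesTo (lam : ℝ) (A : ℕ → ℤ) (x : ℝ) : Prop :=
  (∀ n, cfQ lam A n ≠ 0) ∧
    Filter.Tendsto (fun n => cfP lam A n / cfQ lam A n) Filter.atTop (nhds x)

/-- The value `p_L/q_L` of the finite continued fraction `[a₀; a₁, …, a_L]`. -/
noncomputable def cfValList (lam : ℝ) (a0 : ℤ) (L : List ℤ) : ℝ :=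
  cfP lam (fun i => (a0 :: L).getD i 0) L.length /
    cfQ lam (fun i => (a0 :: L).getD i 0) L.length

/-- The last denominator `q_L` of the finite continued fraction `[a₀; a₁, …, a_L]`. -/
noncomputable def cfDenList (lam : ℝ) (a0 : ℤ) (L : List ℤ) : ℝ :=
  cfQ lam (fun i => (a0 :: L).getD i 0) L.length

/-- The modified floor: `⌊t⌋* = ⌈t⌉ - 1` for `t > 0` and `⌊t⌋* = ⌊t⌋` for `t ≤ 0`. -/
noncomputable def floorstar (t : ℝ) : ℤ := if 0 < t then ⌈t⌉ - 1 else ⌊t⌋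

/-- The nearest `λ`-multiple: `⟨y⟩ = ⌊y/λ + 1/2⌋*`. -/
noncomputable def nearestLam (lam : ℝ) (x : ℝ) : ℤ := floorstar (x / lam + 1 / 2)

/-- The interval map `f_q` on `I_q = [-λ/2, λ/2]`. -/
noncomputable def fq (lam : ℝ) (x : ℝ) : ℝ :=
  if x = 0 then 0 else -1 / x - (nearestLam lam (-1 / x) : ℝ) * lam

/-- `R_q`: equal to `1` for even `q`, and the positive root of `R² + (2-λ_q)R = 1` for odd `q`. -/
noncomputable def Rq (q : ℕ) : ℝ :=
  if Even q then 1 else (lamq q - 2 + Real.sqrt ((2 - lamq q) ^ 2 + 4)) / 2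

/-- `r_q = R_q - λ_q`. -/
noncomputable def rq (q : ℕ) : ℝ := Rq q - lamq q

/-- The map `⟨·⟩*` used by the dual algorithm. -/
noncomputable def nearestDual (lam R y : ℝ) : ℤ :=
  if 0 ≤ y then floorstar (y / lam + 1 - R / lam) else floorstar (y / lam + R / lam)

/-- The dual interval map `f_q^*` on `I_{R_q} = [-R_q, R_q]`. -/
noncomputable def fqstar (lam R : ℝ) (x : ℝ) : ℝ :=
  if x = 0 then 0 else -1 / x - (nearestDual lam R (-1 / x) : ℝ) * lam

/-- The matrix `S = [[0,-1],[1,0]]` as an element of `SL(2,ℝ)`. -/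
noncomputable def matS : Matrix.SpecialLinearGroup (Fin 2) ℝ :=
  ⟨!![0, -1; 1, 0], by norm_num [Matrix.det_fin_two_of]⟩

/-- The matrix `T = [[1,λ],[0,1]]` as an element of `SL(2,ℝ)`. -/
noncomputable def matT (lam : ℝ) : Matrix.SpecialLinearGroup (Fin 2) ℝ :=
  ⟨!![1, lam; 0, 1], by norm_num [Matrix.det_fin_two_of]⟩

/-- The Hecke triangle group `G_q`, the subgroup of `SL(2,ℝ)` generated by `S` and `T_q`. -/
noncomputable def Hecke (q : ℕ) : Subgroup (Matrix.SpecialLinearGroup (Fin 2) ℝ) :=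
  Subgroup.closure {matS, matT (lamq q)}

/-- The Möbius action of `g` on `x ∈ ℝ`. -/
noncomputable def moeb (g : Matrix.SpecialLinearGroup (Fin 2) ℝ) (x : ℝ) : ℝ :=
  (g.val 0 0 * x + g.val 0 1) / (g.val 1 0 * x + g.val 1 1)

/-- `x` and `y` are `G_q`-equivalent. -/
def GqEquiv (q : ℕ) (x y : ℝ) : Prop :=
  ∃ g ∈ Hecke q, (g.val 1 0 * x + g.val 1 1 ≠ 0) ∧ moeb g x = y

/-- Two sequences have a common tail. -/
def CommonTail (a b : ℕ → ℤ) : Prop := ∃ m n : ℕ, ∀ k : ℕ, a (m + k) = b (n + k)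

/-- The period block of `ρ_q`: `(3)` for `q = 3`, `((1)^{h_q-1}, 2)` for even `q`
and `((1)^{h_q}, 2, (1)^{h_q-1}, 2)` for odd `q ≥ 5`. -/
def rhoBlock (q : ℕ) : List ℤ :=
  if q = 3 then [3]
  else if Even q then List.replicate (hQ q - 1) 1 ++ [2]
  else List.replicate (hQ q) 1 ++ 2 :: (List.replicate (hQ q - 1) 1 ++ [2])

/-- The periodic sequence `ρ_q`. -/
def rho (q : ℕ) (i : ℕ) : ℤ := (rhoBlock q).getD (i % (rhoBlock q).length) 0

/-- `x` has the infinite regular `λ_q`-CF with digit sequence `A` (with `A 0 = a₀`). -/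
def HasRegCF (q : ℕ) (x : ℝ) (A : ℕ → ℤ) : Prop :=
  (∀ i, A (i + 1) ≠ 0) ∧ RegularSeq q (fun i => A (i + 1)) ∧ CFConvergesTo (lamq q) A x

/-- `x` has the infinite dual regular `λ_q`-CF with digit sequence `A` (with `A 0 = a₀`). -/
def HasDualRegCF (q : ℕ) (x : ℝ) (A : ℕ → ℤ) : Prop :=
  (∀ i, A (i + 1) ≠ 0) ∧ DualRegularSeq q (fun i => A (i + 1)) ∧ CFConvergesTo (lamq q) A x

/-- The digits of `x` produced by the algorithm for `f_q`: `a_{i+1} = ⟨-1 / f_q^i(x)⟩`. -/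
noncomputable def digitSeq (lam : ℝ) (x : ℝ) : ℕ → ℤ :=
  fun i => nearestLam lam (-1 / (fq lam)^[i] x)

/-- The digits of `x` produced by the algorithm for `f_q^*`: `b_{i+1} = ⟨-1 / (f_q^*)^i(x)⟩*`. -/
noncomputable def digitSeqStar (lam R : ℝ) (x : ℝ) : ℕ → ℤ :=
  fun i => nearestDual lam R (-1 / (fqstar lam R)^[i] x)

/-!
For digits `a` whose orbit stays in `I_q`, comparing two values `-1 / (aλ + y)` amounts to
comparing their digit sequences in a twisted lexicographic order. The endpoint `-λ/2` has a finite
expansion: writing `θ = π/q`, the identity `2 cos θ sin (x + θ) = sin (x + 2θ) + sin x` shows that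
the digit `1` moves `-sin x / sin (x + θ)` to `-sin (x + θ) / sin (x + 2θ)`, so runs of ones can be
evaluated, giving `1^h` for even `q` and `1^h, 2, 1^h` for odd `q`. The forbidden blocks are exactly
the ways in which a sequence or its negative can drop below this expansion, so regularity says that
every tail lies, in the order of digit sequences, between the expansions of `-λ/2` and `λ/2`.

Comparison with the endpoint then keeps all truncations of a regular expansion in `I_q`, where each
map `x ↦ -1 / (aλ + x)` taking values in `I_q` contracts by `(λ/2)² < 1`. This gives convergence and
shows that an orbit is determined by its digits. Since the orbit of `-λ/2` ends at `0`, infinite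
orbits avoid both endpoints, hence their digits are the ones chosen by the nearest-multiple rule.
-/

section FiniteExpansions

/-- The block `[a 0, …, a (n - 1)]` of the first `n` digits of a sequence, in the form in which
`RegularSeq` presents its blocks. -/
def firstDigits (a : ℕ → ℤ) (n : ℕ) : List ℤ := List.ofFn fun j : Fin n => a j

lemma firstDigits_zero (a : ℕ → ℤ) : firstDigits a 0 = [] := rfl

lemma firstDigits_succ (a : ℕ → ℤ) (n : ℕ) :
    firstDigits a (n + 1) = a 0 :: firstDigits (fun k => a (k + 1)) n := by
  simp [firstDigits, List.ofFn_succ]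

lemma firstDigits_mul_left (ε : ℤ) (a : ℕ → ℤ) (n : ℕ) :
    firstDigits (fun k => ε * a k) n = (firstDigits a n).map (ε * ·) := by
  simp [firstDigits, List.map_ofFn, Function.comp_def]

/-- The value of the finite continued fraction `[0; L]`, computed from the right so that the
first digit can be split off; a vanishing denominator contributes the junk value `0`. -/
noncomputable def cfTail (lam : ℝ) : List ℤ → ℝ
  | [] => 0
  | a :: L => -1 / (a * lam + cfTail lam L)

lemma cfTail_map_neg (lam : ℝ) (L : List ℤ) :
    cfTail lam (L.map (-1 * ·)) = -cfTail lam L := by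
  induction L with
  | nil => simp [cfTail]
  | cons a L ih =>
    rw [List.map_cons, cfTail, cfTail, ih, ← div_neg]
    push_cast
    ring

lemma cfP_succ_eq_tail (lam : ℝ) (A : ℕ → ℤ) (n : ℕ) :
    cfP lam A (n + 1) =
      A 0 * lam * cfP lam (fun k => A (k + 1)) n - cfQ lam (fun k => A (k + 1)) n := by
  induction n using Nat.twoStepInduction with
  | zero => simp only [cfP, cfQ]; ring
  | one => simp only [cfP, cfQ]; ring
  | more n ih₀ ih₁ => rw [cfP, ih₀, ih₁, cfP, cfQ]; ring

lemma cfQ_succ_eq_tail (lam : ℝ) (A : ℕ → ℤ) (n : ℕ) :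
    cfQ lam A (n + 1) = cfP lam (fun k => A (k + 1)) n := by
  induction n using Nat.twoStepInduction with
  | zero => simp only [cfP, cfQ]
  | one => simp only [cfP, cfQ]
  | more n ih₀ ih₁ => rw [cfQ, ih₀, ih₁, cfP]

lemma cfQ_ne_zero_and_cfP_div_cfQ_eq {lam : ℝ} {A : ℕ → ℤ} (n : ℕ)
    (hA : ∀ i m, A (i + 1) * lam + cfTail lam (firstDigits (fun k => A (k + i + 2)) m) ≠ 0) :
    cfQ lam A n ≠ 0 ∧
      cfP lam A n / cfQ lam A n = A 0 * lam + cfTail lam (firstDigits (fun k => A (k + 1)) n) := by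
  induction n generalizing A with
  | zero => simp [cfP, cfQ, firstDigits_zero, cfTail]
  | succ n ih =>
    obtain ⟨hQ, hPQ⟩ := ih (A := fun k => A (k + 1)) fun i m => hA (i + 1) m
    have hden : A 1 * lam + cfTail lam (firstDigits (fun k => A (k + 2)) n) ≠ 0 := hA 0 n
    have hP : cfP lam (fun k => A (k + 1)) n =
        (A 1 * lam + cfTail lam (firstDigits (fun k => A (k + 2)) n)) *
          cfQ lam (fun k => A (k + 1)) n := (div_eq_iff hQ).1 hPQ
    rw [cfP_succ_eq_tail, cfQ_succ_eq_tail, firstDigits_succ, cfTail, hP]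
    refine ⟨mul_ne_zero hden hQ, ?_⟩
    change _ = A 0 * lam + -1 / (A 1 * lam + cfTail lam (firstDigits (fun k => A (k + 2)) n))
    generalize A 1 * lam + cfTail lam (firstDigits (fun k => A (k + 2)) n) = d at hden ⊢
    field_simp
    ring

end FiniteExpansions

section Estimates

variable {lam : ℝ}

lemma digit_le_of_mul_add_le (hlam : 0 < lam) {a b : ℤ} {y z : ℝ} (hzy : z - y < lam)
    (h : a * lam + y ≤ b * lam + z) : a ≤ b := by
  have hab : (a : ℝ) < b + 1 := lt_of_mul_lt_mul_right (by linarith) hlam.le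
  exact Int.lt_add_one_iff.1 (by exact_mod_cast hab)

lemma digit_eq_of_mul_add_eq (hlam : 0 < lam) {a b : ℤ} {y z : ℝ} (hy : |y| < lam / 2)
    (hz : |z| ≤ lam / 2) (h : a * lam + y = b * lam + z) : a = b := by
  rw [abs_lt] at hy
  rw [abs_le] at hz
  exact le_antisymm (digit_le_of_mul_add_le hlam (by linarith) h.le)
    (digit_le_of_mul_add_le hlam (by linarith) h.ge)

lemma mul_add_ne_zero_of_abs_le (hlam : 0 < lam) {a : ℤ} {y : ℝ} (ha : a ≠ 0)
    (hy : |y| ≤ lam / 2) : a * lam + y ≠ 0 := fun h =>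
  ha (digit_eq_of_mul_add_eq hlam (a := 0) (y := 0) (by simpa using hlam) hy (by simp [h])).symm

lemma mul_add_pos_of_one_le (hlam : 0 < lam) {a : ℤ} {y : ℝ} (ha : 1 ≤ a)
    (hy : -(lam / 2) ≤ y) : 0 < a * lam + y := by
  have : (1 : ℝ) ≤ a := by exact_mod_cast ha
  nlinarith

lemma mul_add_neg_of_neg (hlam : 0 < lam) {a : ℤ} {y : ℝ} (ha : a < 0) (hy : y ≤ lam / 2) :
    a * lam + y < 0 := by
  have := mul_add_pos_of_one_le hlam (a := -a) (y := -y) (by omega) (by linarith)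
  push_cast at this
  linarith

lemma neg_one_div_le_neg_one_div {u v : ℝ} (hu : 0 < u) (hv : 0 < v) :
    -1 / u ≤ -1 / v ↔ u ≤ v := by
  rw [neg_div, neg_div, neg_le_neg_iff, one_div_le_one_div hv hu]

lemma abs_sub_le_of_mul_add_eq_neg_one {r c x y x' y' : ℝ} (hx : |x| ≤ r) (hy : |y| ≤ r)
    (hxx' : x * (c + x') = -1) (hyy' : y * (c + y') = -1) : |x - y| ≤ r ^ 2 * |x' - y'| := by
  have hxy : x - y = x * y * (x' - y') := by linear_combination x * hyy' - y * hxx'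
  rw [hxy, abs_mul, abs_mul, sq]
  have hr : 0 ≤ r := (abs_nonneg x).trans hx
  gcongr

end Estimates

section Kneading

/-- `KneadingLE cs b`: the finite expansion with positive digits `cs` does not exceed the infinite
expansion with nonzero digits `b` in the order that `-1 / (aλ + y)` induces on digit sequences.
In that order the digits rank `1 < 2 < 3 < ⋯ < -3 < -2 < -1`, and the end of an expansion, where
the value is `0`, ranks between the positive and the negative digits. -/
def KneadingLE : List ℤ → (ℕ → ℤ) → Prop
  | [], b => b 0 ≤ 0
  | c :: cs, b => b 0 ≤ 0 ∨ c < b 0 ∨ b 0 = c ∧ KneadingLE cs fun n => b (n + 1)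

/-- A finite expansion with positive digits all of whose proper tails have values in the interior
of `I_q`. -/
def HasInteriorTails (lam : ℝ) : List ℤ → Prop
  | [] => True
  | c :: cs => 1 ≤ c ∧ -(lam / 2) < cfTail lam cs ∧ HasInteriorTails lam cs

/-- `cs` is the digit sequence of the left endpoint `-λ/2`, whose orbit is required to reach `0`
through interior points. -/
structure IsCriticalExpansion (lam : ℝ) (cs : List ℤ) : Prop where
  hasInteriorTails : HasInteriorTails lam cs
  cfTail_eq : cfTail lam cs = -(lam / 2)

/-- The combinatorial condition characterising digit sequences: no tail of `a` or of `-a` drops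
below the expansion `cs` of the left endpoint. The sequence `-a` is written `-1 * a` so that both
conditions are instances of the sign `ε` in `IsForbidden`. -/
structure KneadingAdmissible (cs : List ℤ) (a : ℕ → ℤ) : Prop where
  ne_zero : ∀ i, a i ≠ 0
  le : ∀ i, KneadingLE cs fun n => a (n + i)
  le_neg : ∀ i, KneadingLE cs fun n => -1 * a (n + i)

variable {lam : ℝ} {cs : List ℤ} {a : ℕ → ℤ}

lemma HasInteriorTails.cfTail_nonpos (hlam : 0 < lam) (hcs : HasInteriorTails lam cs) :
    cfTail lam cs ≤ 0 := by
  cases cs with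
  | nil => exact le_rfl
  | cons c cs =>
    exact div_nonpos_of_nonpos_of_nonneg (by norm_num)
      (mul_add_pos_of_one_le hlam hcs.1 hcs.2.1.le).le

lemma KneadingLE.cfTail_cons_le (hlam : 0 < lam) (hcs : HasInteriorTails lam cs)
    (h : KneadingLE cs a) (ha : a 0 ≠ 0) {y : ℝ} (hy : |y| ≤ lam / 2)
    (hle : ∀ s, HasInteriorTails lam s → KneadingLE s (fun n => a (n + 1)) → cfTail lam s ≤ y) :
    cfTail lam cs ≤ -1 / (a 0 * lam + y) := by
  rw [abs_le] at hy
  rcases ha.lt_or_gt with hneg | hpos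
  · exact (hcs.cfTail_nonpos hlam).trans
      (div_nonneg_of_nonpos (by norm_num) (mul_add_neg_of_neg hlam hneg hy.2).le)
  cases cs with
  | nil => exact absurd h (not_le.2 hpos)
  | cons c cs =>
    obtain ⟨hc, hint, hcs⟩ := hcs
    rw [cfTail, neg_one_div_le_neg_one_div (mul_add_pos_of_one_le hlam hc hint.le)
      (mul_add_pos_of_one_le hlam hpos hy.1)]
    rcases h with h | h | ⟨h, htail⟩
    · exact absurd h (not_le.2 hpos)
    · have : (c : ℝ) + 1 ≤ a 0 := by exact_mod_cast h
      nlinarith [hcs.cfTail_nonpos hlam]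
    · rw [h]
      gcongr
      exact hle cs hcs htail

namespace KneadingAdmissible

lemma tail (h : KneadingAdmissible cs a) : KneadingAdmissible cs fun n => a (n + 1) where
  ne_zero i := h.ne_zero (i + 1)
  le i := h.le (i + 1)
  le_neg i := h.le_neg (i + 1)

lemma shift (h : KneadingAdmissible cs a) (i : ℕ) :
    KneadingAdmissible cs fun n => a (n + i) where
  ne_zero j := h.ne_zero (j + i)
  le j := by simpa only [add_assoc] using h.le (j + i)
  le_neg j := by simpa only [add_assoc] using h.le_neg (j + i)

lemma neg (h : KneadingAdmissible cs a) : KneadingAdmissible cs fun n => -1 * a n where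
  ne_zero i := by simpa using h.ne_zero i
  le := h.le_neg
  le_neg := by simpa using h.le

variable (hlam : 0 < lam) (hcs : IsCriticalExpansion lam cs) (h : KneadingAdmissible cs a)
include hlam hcs h

lemma cfTail_le (n : ℕ) (s : List ℤ) (hs : HasInteriorTails lam s) (hsa : KneadingLE s a) :
    cfTail lam s ≤ cfTail lam (firstDigits a n) := by
  induction n generalizing a s with
  | zero => exact hs.cfTail_nonpos hlam
  | succ n ih =>
    have hlower := ih h.tail cs hcs.hasInteriorTails (h.le 1)
    have hupper := ih h.neg.tail cs hcs.hasInteriorTails (h.le_neg 1)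
    rw [hcs.cfTail_eq] at hlower hupper
    rw [firstDigits_mul_left, cfTail_map_neg] at hupper
    rw [firstDigits_succ, cfTail]
    exact hsa.cfTail_cons_le hlam hs (h.ne_zero 0) (abs_le.2 ⟨hlower, by linarith⟩) (ih h.tail)

lemma abs_cfTail_le (n : ℕ) : |cfTail lam (firstDigits a n)| ≤ lam / 2 := by
  have hlower := h.cfTail_le hlam hcs n cs hcs.hasInteriorTails (h.le 0)
  have hupper := h.neg.cfTail_le hlam hcs n cs hcs.hasInteriorTails (h.le_neg 0)
  rw [hcs.cfTail_eq] at hlower hupper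
  rw [firstDigits_mul_left, cfTail_map_neg] at hupper
  exact abs_le.2 ⟨hlower, by linarith⟩

lemma mul_add_cfTail_ne_zero (n : ℕ) :
    a 0 * lam + cfTail lam (firstDigits (fun k => a (k + 1)) n) ≠ 0 :=
  mul_add_ne_zero_of_abs_le hlam (h.ne_zero 0) (h.tail.abs_cfTail_le hlam hcs n)

lemma cfTail_succ_mul (n : ℕ) :
    cfTail lam (firstDigits a (n + 1)) *
      (a 0 * lam + cfTail lam (firstDigits (fun k => a (k + 1)) n)) = -1 := by
  rw [firstDigits_succ, cfTail, div_mul_cancel₀ _ (h.mul_add_cfTail_ne_zero hlam hcs n)]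

lemma abs_cfTail_sub_succ_le (n : ℕ) :
    |cfTail lam (firstDigits a n) - cfTail lam (firstDigits a (n + 1))| ≤
      lam / 2 * ((lam / 2) ^ 2) ^ n := by
  induction n generalizing a with
  | zero => simpa [firstDigits_zero, cfTail] using h.abs_cfTail_le hlam hcs 1
  | succ n ih =>
    calc _ ≤ (lam / 2) ^ 2 * |cfTail lam (firstDigits (fun k => a (k + 1)) n) -
              cfTail lam (firstDigits (fun k => a (k + 1)) (n + 1))| :=
          abs_sub_le_of_mul_add_eq_neg_one (h.abs_cfTail_le hlam hcs _)
            (h.abs_cfTail_le hlam hcs _) (h.cfTail_succ_mul hlam hcs n)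
            (h.cfTail_succ_mul hlam hcs (n + 1))
      _ ≤ (lam / 2) ^ 2 * (lam / 2 * ((lam / 2) ^ 2) ^ n) := by gcongr; exact ih h.tail
      _ = lam / 2 * ((lam / 2) ^ 2) ^ (n + 1) := by ring

end KneadingAdmissible

end Kneading

section Orbits

/-- `x` is an orbit of `f_q` in `I_q` avoiding `0` with digits `a`, except that the digits are not
required to be those that the nearest-multiple rule selects. -/
structure IsFormalOrbit (lam : ℝ) (a : ℕ → ℤ) (x : ℕ → ℝ) : Prop where
  abs_le : ∀ i, |x i| ≤ lam / 2
  mul_eq : ∀ i, x i * (a i * lam + x (i + 1)) = -1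

lemma sq_half_lt_one {lam : ℝ} (hlam : 0 < lam) (hlam2 : lam < 2) : (lam / 2) ^ 2 < 1 :=
  pow_lt_one₀ (by linarith) (by linarith) two_ne_zero

variable {lam : ℝ} {cs : List ℤ} {a : ℕ → ℤ} {x : ℕ → ℝ}

lemma KneadingAdmissible.exists_isFormalOrbit (hlam : 0 < lam) (hlam2 : lam < 2)
    (hcs : IsCriticalExpansion lam cs) (h : KneadingAdmissible cs a) :
    ∃ x, IsFormalOrbit lam a x := by
  have hlim (i : ℕ) :
      ∃ y, Tendsto (fun n => cfTail lam (firstDigits (fun k => a (k + i)) n)) atTop (𝓝 y) :=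
    cauchySeq_tendsto_of_complete <| cauchySeq_of_le_geometric _ _ (sq_half_lt_one hlam hlam2)
      fun n => (h.shift i).abs_cfTail_sub_succ_le hlam hcs n
  choose x hx using hlim
  refine ⟨x, fun i => ?_, fun i => ?_⟩
  · exact le_of_tendsto (hx i).abs (.of_forall ((h.shift i).abs_cfTail_le hlam hcs))
  · have hprod := ((tendsto_add_atTop_iff_nat 1).2 (hx i)).mul
      ((hx (i + 1)).const_add (a i * lam))
    refine tendsto_nhds_unique (hprod.congr fun n => ?_) tendsto_const_nhds
    simpa only [zero_add, add_assoc, add_comm 1 i] using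
      (h.shift i).cfTail_succ_mul hlam hcs n

namespace IsFormalOrbit

lemma tail (h : IsFormalOrbit lam a x) :
    IsFormalOrbit lam (fun n => a (n + 1)) (fun n => x (n + 1)) where
  abs_le i := h.abs_le (i + 1)
  mul_eq i := h.mul_eq (i + 1)

lemma shift (h : IsFormalOrbit lam a x) (i : ℕ) :
    IsFormalOrbit lam (fun n => a (n + i)) (fun n => x (n + i)) where
  abs_le n := h.abs_le (n + i)
  mul_eq n := by simpa only [add_right_comm] using h.mul_eq (n + i)

lemma neg (h : IsFormalOrbit lam a x) : IsFormalOrbit lam (fun n => -1 * a n) (fun n => -x n) where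
  abs_le i := by simpa using h.abs_le i
  mul_eq i := by push_cast; linear_combination h.mul_eq i

lemma ne_zero (h : IsFormalOrbit lam a x) (i : ℕ) : x i ≠ 0 := by
  intro hx
  simpa [hx] using h.mul_eq i

lemma neg_one_div_eq (h : IsFormalOrbit lam a x) (i : ℕ) :
    -1 / x i = a i * lam + x (i + 1) := by
  rw [div_eq_iff (h.ne_zero i), mul_comm, h.mul_eq]

lemma eq_neg_one_div (h : IsFormalOrbit lam a x) (i : ℕ) :
    x i = -1 / (a i * lam + x (i + 1)) :=
  eq_div_of_mul_eq (fun hden => by simpa [hden] using h.mul_eq i) (h.mul_eq i)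

lemma digit_ne_zero (hlam2 : lam < 2) (h : IsFormalOrbit lam a x) (i : ℕ) : a i ≠ 0 := by
  intro ha
  have hprod : |x i| * |x (i + 1)| = 1 := by
    simpa [ha, abs_mul] using congrArg abs (h.mul_eq i)
  have := mul_lt_one_of_nonneg_of_lt_one_left (abs_nonneg _)
    ((h.abs_le i).trans_lt (by linarith)) ((h.abs_le (i + 1)).trans (by linarith))
  exact this.ne hprod

lemma kneadingLE_of_cfTail_le (hlam : 0 < lam) (hcs : HasInteriorTails lam cs)
    (h : IsFormalOrbit lam a x) (hle : cfTail lam cs ≤ x 0) : KneadingLE cs a := by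
  induction cs generalizing a x with
  | nil =>
    by_contra hpos
    have hden := mul_add_pos_of_one_le hlam (not_le.1 hpos) (_root_.abs_le.1 (h.abs_le 1)).1
    have hx : 0 ≤ x 0 := hle
    nlinarith [h.mul_eq 0]
  | cons c cs ih =>
    obtain ⟨hc, hint, hcs⟩ := hcs
    obtain ⟨hx1, hx1'⟩ := _root_.abs_le.1 (h.abs_le 1)
    rcases le_or_gt (a 0) 0 with hneg | hpos
    · exact Or.inl hneg
    rw [cfTail, h.eq_neg_one_div 0, neg_one_div_le_neg_one_div
      (mul_add_pos_of_one_le hlam hc hint.le) (mul_add_pos_of_one_le hlam hpos hx1)] at hle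
    rcases (digit_le_of_mul_add_le hlam (by linarith) hle).lt_or_eq with hlt | rfl
    · exact Or.inr (Or.inl hlt)
    · exact Or.inr (Or.inr ⟨rfl, ih hcs h.tail (by simpa using hle)⟩)

lemma ne_cfTail (hlam : 0 < lam) (hcs : HasInteriorTails lam cs) (h : IsFormalOrbit lam a x) :
    x 0 ≠ cfTail lam cs := by
  induction cs generalizing a x with
  | nil => exact h.ne_zero 0
  | cons c cs ih =>
    obtain ⟨-, hint, hcs⟩ := hcs
    intro heq
    have hden : c * lam + cfTail lam cs = a 0 * lam + x 1 := by
      rw [← h.neg_one_div_eq 0, heq, cfTail]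
      simp
    have habs : |cfTail lam cs| < lam / 2 :=
      abs_lt.2 ⟨hint, (hcs.cfTail_nonpos hlam).trans_lt (half_pos hlam)⟩
    have hdigit := digit_eq_of_mul_add_eq hlam habs (h.abs_le 1) hden
    rw [hdigit] at hden
    exact ih hcs h.tail (add_left_cancel hden).symm

variable (hlam : 0 < lam) (hcs : IsCriticalExpansion lam cs) (h : IsFormalOrbit lam a x)
include hlam hcs h

lemma kneadingLE (i : ℕ) : KneadingLE cs fun n => a (n + i) := by
  refine (h.shift i).kneadingLE_of_cfTail_le hlam hcs.hasInteriorTails ?_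
  rw [hcs.cfTail_eq]
  exact (_root_.abs_le.1 ((h.shift i).abs_le 0)).1

lemma kneadingAdmissible (hlam2 : lam < 2) : KneadingAdmissible cs a where
  ne_zero := h.digit_ne_zero hlam2
  le := h.kneadingLE hlam hcs
  le_neg := h.neg.kneadingLE hlam hcs

lemma ne_neg_half (i : ℕ) : x i ≠ -(lam / 2) := by
  simpa [hcs.cfTail_eq] using (h.shift i).ne_cfTail hlam hcs.hasInteriorTails

lemma abs_lt (i : ℕ) : |x i| < lam / 2 := by
  refine lt_of_le_of_ne (h.abs_le i) fun heq => ?_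
  rcases eq_or_eq_neg_of_abs_eq heq with hx | hx
  · exact h.neg.ne_neg_half hlam hcs i (congrArg Neg.neg hx)
  · exact h.ne_neg_half hlam hcs i hx

lemma abs_sub_cfTail_le (hlam2 : lam < 2) (n : ℕ) :
    |x 0 - cfTail lam (firstDigits a n)| ≤ lam / 2 * ((lam / 2) ^ 2) ^ n := by
  have hadm := h.kneadingAdmissible hlam hcs hlam2
  induction n generalizing a x with
  | zero => simpa [firstDigits_zero, cfTail] using h.abs_le 0
  | succ n ih =>
    calc _ ≤ (lam / 2) ^ 2 * |x 1 - cfTail lam (firstDigits (fun k => a (k + 1)) n)| :=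
          abs_sub_le_of_mul_add_eq_neg_one (h.abs_le 0) (hadm.abs_cfTail_le hlam hcs _)
            (h.mul_eq 0) (hadm.cfTail_succ_mul hlam hcs n)
      _ ≤ (lam / 2) ^ 2 * (lam / 2 * ((lam / 2) ^ 2) ^ n) := by
          gcongr; exact ih h.tail hadm.tail
      _ = lam / 2 * ((lam / 2) ^ 2) ^ (n + 1) := by ring

lemma tendsto_cfTail (hlam2 : lam < 2) :
    Tendsto (fun n => cfTail lam (firstDigits a n)) atTop (𝓝 (x 0)) := by
  have hgeom : Tendsto (fun n : ℕ => lam / 2 * ((lam / 2) ^ 2) ^ n) atTop (𝓝 0) := by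
    simpa using (tendsto_pow_atTop_nhds_zero_of_lt_one (sq_nonneg (lam / 2))
      (sq_half_lt_one hlam hlam2)).const_mul (lam / 2)
  refine tendsto_iff_dist_tendsto_zero.2 (squeeze_zero (fun _ => dist_nonneg) (fun n => ?_) hgeom)
  rw [dist_comm]
  exact h.abs_sub_cfTail_le hlam hcs hlam2 n

end IsFormalOrbit

lemma IsFormalOrbit.cfConvergesTo {A : ℕ → ℤ} (hlam : 0 < lam) (hlam2 : lam < 2)
    (hcs : IsCriticalExpansion lam cs) (h : IsFormalOrbit lam (fun n => A (n + 1)) x) :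
    CFConvergesTo lam A (A 0 * lam + x 0) := by
  have hadm := h.kneadingAdmissible hlam hcs hlam2
  have hconv (n : ℕ) := cfQ_ne_zero_and_cfP_div_cfQ_eq (lam := lam) (A := A) n fun i m => by
    simpa [add_right_comm] using (hadm.shift i).mul_add_cfTail_ne_zero hlam hcs m
  exact ⟨fun n => (hconv n).1, ((h.tendsto_cfTail hlam hcs hlam2).const_add _).congr
    fun n => (hconv n).2.symm⟩

end Orbits

section NearestMultiple

lemma floorstar_le (t : ℝ) : (floorstar t : ℝ) ≤ t := by
  unfold floorstar
  split_ifs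
  · push_cast
    linarith [Int.ceil_lt_add_one t]
  · exact Int.floor_le t

lemma le_floorstar_add_one (t : ℝ) : t ≤ floorstar t + 1 := by
  unfold floorstar
  split_ifs
  · push_cast
    linarith [Int.le_ceil t]
  · exact (Int.lt_floor_add_one t).le

variable {lam : ℝ}

lemma abs_sub_nearestLam_mul_le (hlam : 0 < lam) (y : ℝ) :
    |y - nearestLam lam y * lam| ≤ lam / 2 := by
  have hle := mul_le_mul_of_nonneg_right (floorstar_le (y / lam + 1 / 2)) hlam.le
  have hge := mul_le_mul_of_nonneg_right (le_floorstar_add_one (y / lam + 1 / 2)) hlam.le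
  rw [add_mul, div_mul_cancel₀ _ hlam.ne'] at hle hge
  unfold nearestLam
  exact abs_le.2 ⟨by linarith, by linarith⟩

lemma nearestLam_mul_add (hlam : 0 < lam) (a : ℤ) {y : ℝ} (hy : |y| < lam / 2) :
    nearestLam lam (a * lam + y) = a :=
  (digit_eq_of_mul_add_eq hlam hy (abs_sub_nearestLam_mul_le hlam (a * lam + y)) (by ring)).symm

lemma fq_of_ne_zero {x : ℝ} (hx : x ≠ 0) :
    fq lam x = -1 / x - nearestLam lam (-1 / x) * lam := if_neg hx

lemma isFormalOrbit_iterate_fq (hlam : 0 < lam) {x : ℝ} (hx : |x| ≤ lam / 2)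
    (hne : ∀ n, (fq lam)^[n] x ≠ 0) :
    IsFormalOrbit lam (digitSeq lam x) fun i => (fq lam)^[i] x := by
  have hsucc (i : ℕ) : (fq lam)^[i + 1] x = -1 / (fq lam)^[i] x - digitSeq lam x i * lam := by
    rw [Function.iterate_succ_apply', fq_of_ne_zero (hne i), digitSeq]
  refine ⟨fun i => ?_, fun i => ?_⟩
  · cases i with
    | zero => exact hx
    | succ i => simpa only [hsucc, digitSeq] using abs_sub_nearestLam_mul_le hlam _
  · rw [hsucc, add_sub_cancel, mul_div_cancel₀ _ (hne i)]

namespace IsFormalOrbit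

variable {cs : List ℤ} {a : ℕ → ℤ} {x : ℕ → ℝ} (hlam : 0 < lam)
  (hcs : IsCriticalExpansion lam cs) (h : IsFormalOrbit lam a x)
include hlam hcs h

lemma nearestLam_eq (i : ℕ) : nearestLam lam (-1 / x i) = a i := by
  rw [h.neg_one_div_eq, nearestLam_mul_add hlam _ (h.abs_lt hlam hcs (i + 1))]

lemma iterate_fq_eq (i : ℕ) : (fq lam)^[i] (x 0) = x i := by
  induction i with
  | zero => rfl
  | succ i ih =>
    rw [Function.iterate_succ_apply', ih, fq_of_ne_zero (h.ne_zero i), h.nearestLam_eq hlam hcs,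
      h.neg_one_div_eq, add_sub_cancel_left]

lemma digitSeq_eq : digitSeq lam (x 0) = a := by
  funext i
  rw [digitSeq, h.iterate_fq_eq hlam hcs, h.nearestLam_eq hlam hcs]

end IsFormalOrbit

lemma bijOn_digitSeq_kneadingAdmissible {cs : List ℤ} (hlam : 0 < lam) (hlam2 : lam < 2)
    (hcs : IsCriticalExpansion lam cs) :
    Set.BijOn (digitSeq lam) {x | |x| ≤ lam / 2 ∧ ∀ n : ℕ, (fq lam)^[n] x ≠ 0}
      {a | KneadingAdmissible cs a} := by
  refine ⟨fun x hx => ?_, fun x hx y hy hxy => ?_, fun a ha => ?_⟩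
  · exact (isFormalOrbit_iterate_fq hlam hx.1 hx.2).kneadingAdmissible hlam hcs hlam2
  · have hlimx := (isFormalOrbit_iterate_fq hlam hx.1 hx.2).tendsto_cfTail hlam hcs hlam2
    have hlimy := (isFormalOrbit_iterate_fq hlam hy.1 hy.2).tendsto_cfTail hlam hcs hlam2
    rw [hxy] at hlimx
    exact tendsto_nhds_unique hlimx hlimy
  · obtain ⟨x, hx⟩ := ha.exists_isFormalOrbit hlam hlam2 hcs
    refine ⟨x 0, ⟨hx.abs_le 0, fun n => ?_⟩, hx.digitSeq_eq hlam hcs⟩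
    rw [hx.iterate_fq_eq hlam hcs]
    exact hx.ne_zero n

end NearestMultiple

section CriticalExpansion

open Real

/-- The digits of the expansion of `-λ_q/2`: `1^h` for even `q` and `1^h, 2, 1^h` for odd `q`,
where `h = h_q`. -/
def criticalDigits (q : ℕ) : List ℤ :=
  if Even q then List.replicate (hQ q) 1
  else List.replicate (hQ q) 1 ++ 2 :: List.replicate (hQ q) 1

lemma two_mul_cos_mul_sin_add (θ x : ℝ) :
    2 * cos θ * sin (x + θ) = sin (x + θ + θ) + sin x := by
  have h := two_mul_sin_mul_cos (x + θ) θ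
  rw [add_sub_cancel_right] at h
  linarith

lemma sin_div_sin_add_lt_cos {θ x : ℝ} (hθ : 0 < θ) (hx : 0 ≤ x) (hxθ : x + θ < π / 2) :
    sin x / sin (x + θ) < cos θ := by
  have hsinθ : 0 < sin θ := sin_pos_of_pos_of_lt_pi hθ (by linarith)
  have hsin : 0 < sin (x + θ) := sin_pos_of_pos_of_lt_pi (by linarith) (by linarith)
  have hcos : 0 < cos (x + θ) := cos_pos_of_mem_Ioo ⟨by linarith, hxθ⟩
  have hsub : sin x = sin (x + θ) * cos θ - cos (x + θ) * sin θ := by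
    rw [← sin_sub, add_sub_cancel_right]
  rw [div_lt_iff₀ hsin, hsub]
  linarith [mul_pos hcos hsinθ]

lemma hasInteriorTails_and_cfTail_replicate_one_append {θ x : ℝ} {L : List ℤ} {j : ℕ} (hθ : 0 < θ)
    (hx : 0 ≤ x) (hxj : x + j * θ + θ ≤ π / 2) (hL : HasInteriorTails (2 * cos θ) L)
    (hLx : cfTail (2 * cos θ) L = -(sin x / sin (x + θ))) :
    HasInteriorTails (2 * cos θ) (List.replicate j 1 ++ L) ∧
      cfTail (2 * cos θ) (List.replicate j 1 ++ L) =
        -(sin (x + j * θ) / sin (x + j * θ + θ)) := by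
  induction j with
  | zero => simpa using ⟨hL, hLx⟩
  | succ j ih =>
    have hsucc : x + (j + 1 : ℕ) * θ = x + j * θ + θ := by push_cast; ring
    rw [hsucc] at hxj ⊢
    obtain ⟨hint, hval⟩ := ih (by linarith)
    have hnonneg : 0 ≤ x + j * θ := by positivity
    have hsin : 0 < sin (x + j * θ + θ) := sin_pos_of_pos_of_lt_pi (by linarith) (by linarith)
    rw [List.replicate_succ, List.cons_append]
    refine ⟨⟨le_rfl, ?_, hint⟩, ?_⟩
    · rw [hval]
      linarith [sin_div_sin_add_lt_cos hθ hnonneg (by linarith)]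
    · have hden : (1 : ℤ) * (2 * cos θ) + -(sin (x + j * θ) / sin (x + j * θ + θ)) =
          sin (x + j * θ + θ + θ) / sin (x + j * θ + θ) := by
        field_simp
        push_cast
        linarith [two_mul_cos_mul_sin_add θ (x + j * θ)]
      rw [cfTail, hval, hden, neg_div, one_div_div]

lemma isCriticalExpansion_replicate_one_append {θ x : ℝ} {L : List ℤ} {j : ℕ} (hθ : 0 < θ)
    (hx : 0 ≤ x) (hxj : x + j * θ + θ = π / 2) (hL : HasInteriorTails (2 * cos θ) L)
    (hLx : cfTail (2 * cos θ) L = -(sin x / sin (x + θ))) :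
    IsCriticalExpansion (2 * cos θ) (List.replicate j 1 ++ L) := by
  obtain ⟨hint, hval⟩ := hasInteriorTails_and_cfTail_replicate_one_append hθ hx hxj.le hL hLx
  refine ⟨hint, ?_⟩
  rw [hval, hxj, sin_pi_div_two, eq_sub_of_add_eq hxj, sin_pi_div_two_sub]
  ring

lemma isCriticalExpansion_replicate_one {θ : ℝ} {h : ℕ} (hθ : 0 < θ) (hhθ : (2 * h + 2) * θ = π) :
    IsCriticalExpansion (2 * cos θ) (List.replicate h 1) := by
  simpa using isCriticalExpansion_replicate_one_append (x := 0) (L := []) hθ le_rfl (by linarith)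
    trivial (by simp [cfTail])

lemma hasInteriorTails_and_cfTail_two_cons_replicate_one {θ : ℝ} {h : ℕ} (hθ : 0 < θ)
    (hhθ : (2 * h + 3) * θ = π) :
    HasInteriorTails (2 * cos θ) (2 :: List.replicate h 1) ∧
      cfTail (2 * cos θ) (2 :: List.replicate h 1) = -(sin (θ / 2) / sin (θ / 2 + θ)) := by
  have hh : 0 ≤ h * θ := by positivity
  obtain ⟨hint, hval⟩ := hasInteriorTails_and_cfTail_replicate_one_append (x := 0) (L := [])
    (j := h) hθ le_rfl (by linarith) trivial (by simp [cfTail])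
  rw [List.append_nil] at hint hval
  rw [zero_add] at hval
  have hsin : 0 < sin (h * θ + θ) := sin_pos_of_pos_of_lt_pi (by linarith) (by linarith)
  have hsin_half : 0 < sin (θ / 2) := sin_pos_of_pos_of_lt_pi (by linarith) (by linarith)
  have hcos : 0 < cos θ := cos_pos_of_mem_Ioo ⟨by linarith, by linarith⟩
  have hreflect : sin (h * θ + θ + θ) = sin (h * θ + θ) := by
    rw [← sin_pi_sub]
    congr 1
    linarith
  have hratio : sin (h * θ) / sin (h * θ + θ) = 2 * cos θ - 1 := by
    rw [div_eq_iff hsin.ne']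
    linarith [two_mul_cos_mul_sin_add θ (h * θ)]
  have hodd : sin (θ / 2 + θ) = (1 + 2 * cos θ) * sin (θ / 2) := by
    have hshift := two_mul_cos_mul_sin_add θ (-(θ / 2))
    rw [show -(θ / 2) + θ = θ / 2 by ring, sin_neg] at hshift
    linarith
  refine ⟨⟨by norm_num, ?_, hint⟩, ?_⟩
  · rw [hval]
    linarith [sin_div_sin_add_lt_cos hθ hh (by linarith)]
  · have hden : 1 + 2 * cos θ ≠ 0 := by positivity
    have hcancel : ((2 : ℤ) : ℝ) * (2 * cos θ) + -(2 * cos θ - 1) = 1 + 2 * cos θ := by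
      push_cast
      ring
    rw [cfTail, hval, hratio, hodd, hcancel]
    field_simp

lemma isCriticalExpansion_replicate_one_two_replicate_one {θ : ℝ} {h : ℕ} (hθ : 0 < θ)
    (hhθ : (2 * h + 3) * θ = π) :
    IsCriticalExpansion (2 * cos θ) (List.replicate h 1 ++ 2 :: List.replicate h 1) := by
  obtain ⟨hint, hval⟩ := hasInteriorTails_and_cfTail_two_cons_replicate_one hθ hhθ
  exact isCriticalExpansion_replicate_one_append hθ (by linarith) (by linarith) hint hval

variable {q : ℕ}

lemma two_mul_hQ_add_two (hq : 3 ≤ q) (heven : Even q) : 2 * hQ q + 2 = q := by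
  rw [hQ, if_pos heven]
  rw [Nat.even_iff] at heven
  omega

lemma two_mul_hQ_add_three (hq : 3 ≤ q) (hodd : ¬Even q) : 2 * hQ q + 3 = q := by
  rw [hQ, if_neg hodd]
  rw [Nat.even_iff] at hodd
  omega

lemma isCriticalExpansion_criticalDigits (hq : 3 ≤ q) :
    IsCriticalExpansion (lamq q) (criticalDigits q) := by
  have hq0 : (0 : ℝ) < q := by exact_mod_cast (by omega : 0 < q)
  have hmul : (q : ℝ) * (π / q) = π := mul_div_cancel₀ _ hq0.ne'
  unfold criticalDigits lamq
  split_ifs with heven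
  · refine isCriticalExpansion_replicate_one (by positivity) ?_
    have hcast : 2 * (hQ q : ℝ) + 2 = q := by exact_mod_cast two_mul_hQ_add_two hq heven
    rw [hcast, hmul]
  · refine isCriticalExpansion_replicate_one_two_replicate_one (by positivity) ?_
    have hcast : 2 * (hQ q : ℝ) + 3 = q := by exact_mod_cast two_mul_hQ_add_three hq heven
    rw [hcast, hmul]

lemma pi_div_mem_Ioo (hq : 3 ≤ q) : π / q ∈ Set.Ioo 0 (π / 2) := by
  have hq2 : (2 : ℝ) < q := by exact_mod_cast hq
  exact ⟨by positivity, div_lt_div_of_pos_left pi_pos two_pos hq2⟩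

lemma lamq_pos (hq : 3 ≤ q) : 0 < lamq q := by
  obtain ⟨hpos, hlt⟩ := pi_div_mem_Ioo hq
  exact mul_pos two_pos (cos_pos_of_mem_Ioo ⟨by linarith, hlt⟩)

lemma lamq_lt_two (hq : 3 ≤ q) : lamq q < 2 := by
  obtain ⟨hpos, hlt⟩ := pi_div_mem_Ioo hq
  have hcos := cos_lt_cos_of_nonneg_of_le_pi le_rfl (by linarith) hpos
  rw [cos_zero] at hcos
  unfold lamq
  linarith

end CriticalExpansion

section Regularity

/-- The sequence `b` begins with the block `L`. -/
def HasPrefix (b : ℕ → ℤ) (L : List ℤ) : Prop := ∃ n, firstDigits b n = L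

lemma hasPrefix_nil (b : ℕ → ℤ) : HasPrefix b [] := ⟨0, rfl⟩

lemma hasPrefix_cons {b : ℕ → ℤ} {c : ℤ} {L : List ℤ} :
    HasPrefix b (c :: L) ↔ b 0 = c ∧ HasPrefix (fun n => b (n + 1)) L := by
  constructor
  · rintro ⟨n, hn⟩
    cases n with
    | zero => simp [firstDigits_zero] at hn
    | succ n =>
      rw [firstDigits_succ, List.cons.injEq] at hn
      exact ⟨hn.1, n, hn.2⟩
  · rintro ⟨rfl, n, rfl⟩
    exact ⟨n + 1, firstDigits_succ b n⟩

lemma hasPrefix_append {b : ℕ → ℤ} {L M : List ℤ} :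
    HasPrefix b (L ++ M) ↔ HasPrefix b L ∧ HasPrefix (fun n => b (n + L.length)) M := by
  induction L generalizing b with
  | nil => simp [hasPrefix_nil]
  | cons c L ih =>
    simp only [List.cons_append, hasPrefix_cons, ih, and_assoc, List.length_cons, add_assoc]

lemma hasPrefix_mul_left {ε : ℤ} (hε : ε * ε = 1) {b : ℕ → ℤ} {L : List ℤ} :
    HasPrefix (fun n => ε * b n) L ↔ HasPrefix b (L.map (ε * ·)) := by
  induction L generalizing b with
  | nil => simp [hasPrefix_nil]
  | cons c L ih =>
    have hc : ε * b 0 = c ↔ b 0 = ε * c :=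
      ⟨fun h => by rw [← h, ← mul_assoc, hε, one_mul], fun h => by rw [h, ← mul_assoc, hε, one_mul]⟩
    simp only [List.map_cons, hasPrefix_cons, ih, hc]

lemma kneadingLE_replicate_one_append {h : ℕ} {cs : List ℤ} {b : ℕ → ℤ} :
    KneadingLE (List.replicate h 1 ++ cs) b ↔
      (HasPrefix b (List.replicate h 1) → KneadingLE cs fun n => b (n + h)) := by
  induction h generalizing b with
  | zero => simp [hasPrefix_nil]
  | succ h ih =>
    rw [List.replicate_succ, List.cons_append, KneadingLE, ih, hasPrefix_cons, and_imp]
    simp only [add_assoc]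
    by_cases hb : b 0 = 1
    · simp [hb]
    · simp only [hb, false_and, or_false, false_imp_iff, iff_true]
      omega

lemma not_kneadingLE_replicate_iff {h : ℕ} {b : ℕ → ℤ} :
    ¬KneadingLE (List.replicate h 1) b ↔
      ∃ m, 1 ≤ m ∧ HasPrefix b (List.replicate h 1 ++ [m]) := by
  rw [← List.append_nil (List.replicate h 1), kneadingLE_replicate_one_append]
  simp [hasPrefix_append, hasPrefix_cons, hasPrefix_nil, KneadingLE, Int.lt_iff_add_one_le,
    and_comm]

lemma not_kneadingLE_replicate_two_replicate_iff {h : ℕ} {b : ℕ → ℤ} :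
    ¬KneadingLE (List.replicate h 1 ++ 2 :: List.replicate h 1) b ↔
      HasPrefix b (List.replicate (h + 1) 1) ∨
        ∃ m, 1 ≤ m ∧ HasPrefix b (List.replicate h 1 ++ 2 :: (List.replicate h 1 ++ [m])) := by
  have hlex (P : Prop) : (b h = 1 ∨ b h = 2 ∧ ¬P) ↔ ¬(b h ≤ 0 ∨ 2 < b h ∨ b h = 2 ∧ P) := by
    by_cases hP : P <;>
      simp only [hP, not_true_eq_false, not_false_eq_true, and_true, and_false, or_false] <;> omega
  rw [kneadingLE_replicate_one_append, List.replicate_succ']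
  simp only [hasPrefix_append, hasPrefix_cons, hasPrefix_nil, KneadingLE, List.length_replicate,
    zero_add, and_true, Classical.not_imp, ← hlex, not_kneadingLE_replicate_iff]
  constructor
  · rintro ⟨hpre, hb | ⟨hb, m, hm, hrest⟩⟩
    exacts [Or.inl ⟨hpre, hb⟩, Or.inr ⟨m, hm, hpre, hb, hrest⟩]
  · rintro (⟨hpre, hb⟩ | ⟨m, hm, hpre, hb, hrest⟩)
    exacts [⟨hpre, Or.inl hb⟩, ⟨hpre, Or.inr ⟨hb, m, hm, hrest⟩⟩]

variable {q : ℕ} {a b : ℕ → ℤ}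

lemma exists_isForbidden_firstDigits_iff :
    (∃ n, IsForbidden q (firstDigits b n)) ↔
      ∃ ε : ℤ, (ε = 1 ∨ ε = -1) ∧ ¬KneadingLE (criticalDigits q) fun n => ε * b n := by
  unfold IsForbidden
  rw [exists_comm]
  refine exists_congr fun ε => ?_
  rw [exists_and_left]
  refine and_congr_right fun hε => ?_
  have hεε : ε * ε = 1 := by rcases hε with rfl | rfl <;> rfl
  unfold criticalDigits
  split_ifs
  · rw [not_kneadingLE_replicate_iff]
    simp only [hasPrefix_mul_left hεε, List.map_append, List.map_replicate, List.map_cons,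
      List.map_nil, mul_one]
    constructor
    · rintro ⟨n, hn | ⟨m, hm, hn⟩⟩
      · exact ⟨1, le_rfl, n, by rw [hn, List.replicate_succ', mul_one]⟩
      · exact ⟨m, hm, n, hn⟩
    · rintro ⟨m, hm, n, hn⟩
      exact ⟨n, Or.inr ⟨m, hm, hn⟩⟩
  · rw [not_kneadingLE_replicate_two_replicate_iff]
    simp only [hasPrefix_mul_left hεε, List.map_append, List.map_replicate, List.map_cons,
      List.map_nil, mul_one]
    constructor
    · rintro ⟨n, hn | ⟨m, hm, hn⟩⟩
      · exact Or.inl ⟨n, hn⟩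
      · exact Or.inr ⟨m, hm, n, hn⟩
    · rintro (⟨n, hn⟩ | ⟨m, hm, n, hn⟩)
      · exact ⟨n, Or.inl hn⟩
      · exact ⟨n, Or.inr ⟨m, hm, hn⟩⟩

lemma regularSeq_iff_kneadingLE :
    RegularSeq q a ↔ ∀ i, (KneadingLE (criticalDigits q) fun n => a (n + i)) ∧
      KneadingLE (criticalDigits q) fun n => -1 * a (n + i) := by
  refine forall_congr' fun i => ?_
  have hforbidden := exists_isForbidden_firstDigits_iff (q := q) (b := fun n => a (n + i))
  simp only [firstDigits, add_comm _ i] at hforbidden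
  rw [← not_exists, hforbidden]
  simp [or_and_right, exists_or, add_comm _ i]

lemma kneadingAdmissible_criticalDigits_iff :
    KneadingAdmissible (criticalDigits q) a ↔ (∀ i, a i ≠ 0) ∧ RegularSeq q a := by
  rw [regularSeq_iff_kneadingLE]
  exact ⟨fun h => ⟨h.ne_zero, fun i => ⟨h.le i, h.le_neg i⟩⟩,
    fun ⟨hne, hle⟩ => ⟨hne, fun i => (hle i).1, fun i => (hle i).2⟩⟩

end Regularity

/-- The map `f_q` generates the regular `λ_q`-CF's: for every `x ∈ I_q` whose `f_q`-orbit
avoids `0`, the digits `a_i = ⟨-1/f_q^{i-1}(x)⟩` are nonzero, form an infinite `q`-regular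
sequence whose continued fraction `[0; a₁, a₂, …]` converges to `x`; and `x ↦ (a_i)` is a
bijection onto the set of infinite `q`-regular sequences. -/
theorem stmt12 (q : ℕ) (hq : 3 ≤ q) :
    (∀ x ∈ {x : ℝ | x ∈ Set.Icc (-(lamq q) / 2) (lamq q / 2) ∧
        ∀ n : ℕ, (fq (lamq q))^[n] x ≠ 0},
      (∀ i, digitSeq (lamq q) x i ≠ 0) ∧
        RegularSeq q (digitSeq (lamq q) x) ∧
        CFConvergesTo (lamq q) (fun n => if n = 0 then 0 else digitSeq (lamq q) x (n - 1)) x) ∧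
    Set.BijOn (digitSeq (lamq q))
      {x : ℝ | x ∈ Set.Icc (-(lamq q) / 2) (lamq q / 2) ∧
        ∀ n : ℕ, (fq (lamq q))^[n] x ≠ 0}
      {a : ℕ → ℤ | (∀ i, a i ≠ 0) ∧ RegularSeq q a} := by
  have hpos := lamq_pos hq
  have hlt := lamq_lt_two hq
  have hcs := isCriticalExpansion_criticalDigits hq
  have hbij := bijOn_digitSeq_kneadingAdmissible hpos hlt hcs
  simp only [kneadingAdmissible_criticalDigits_iff, abs_le, ← neg_div] at hbij
  refine ⟨fun x hx => ?_, hbij⟩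
  obtain ⟨hne, hreg⟩ := hbij.mapsTo hx
  have hxI : |x| ≤ lamq q / 2 := abs_le.2 (by simpa only [neg_div] using Set.mem_Icc.1 hx.1)
  have horbit := isFormalOrbit_iterate_fq hpos hxI hx.2
  refine ⟨hne, hreg, ?_⟩
  simpa using IsFormalOrbit.cfConvergesTo
    (A := fun n => if n = 0 then 0 else digitSeq (lamq q) x (n - 1)) hpos hlt hcs horbit
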